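/- Let p be an odd prime and let r be an element of ZMod p with r ≠ 0 and r ≠ 1. Define the sequence c : ℕ → ZMod p by c 1 = 0 and c (ℓ+1) = (ℓ : ZMod p) + (c ℓ - (ℓ : ZMod p)) * r⁻¹ for ℓ ≥ 1. Then c (p-1) = -1 in ZMod p. (This is the key computation showing that the natural sum of all symbols 1,…,p in the loop L_{p,r} equals zero: the partial sum of the first p-1 symbols is -p, and -p + p = 0.) -/

import Mathlib

/-- If `c 1 = 0` and `c (ℓ+1) = ℓ + (c ℓ - ℓ) * r⁻¹` for `ℓ ≥ 1`, then
`c (p-1) = -1` in `ZMod p`: the key computation showing that the natural sum of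
all symbols `1,…,p` in the loop `L_{p,r}` is zero. -/
theorem Lpr_partial_sum_penultimate (p : ℕ) (hp : p.Prime) (hodd : p ≠ 2)
    (r : ZMod p) (hr0 : r ≠ 0) (hr1 : r ≠ 1)
    (c : ℕ → ZMod p) (hc1 : c 1 = 0)
    (hrec : ∀ ℓ : ℕ, 1 ≤ ℓ → c (ℓ + 1) = (ℓ : ZMod p) + (c ℓ - (ℓ : ZMod p)) * r⁻¹) :
    c (p - 1) = -1 := by
  haveI : Fact p.Prime := ⟨hp⟩
  have key : ∀ n : ℕ, (r⁻¹ - 1) * (c (n + 1) - ((n + 1 : ℕ) : ZMod p)) = 1 - r⁻¹ ^ (n + 1) := by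
    intro n
    induction n with
    | zero => rw [zero_add, hc1]; push_cast; ring
    | succ k ih =>
      rw [hrec (k + 1) (by omega), pow_succ]
      push_cast at ih ⊢
      linear_combination r⁻¹ * ih
  have h2 := hp.two_le
  have h := key (p - 2)
  have e : p - 2 + 1 = p - 1 := by omega
  rw [e, ZMod.pow_card_sub_one_eq_one (inv_ne_zero hr0), sub_self] at h
  have hs : r⁻¹ - 1 ≠ 0 := by
    intro h0
    exact hr1 (inv_eq_one.mp (sub_eq_zero.mp h0))
  have h3 := (mul_eq_zero.mp h).resolve_left hs
  rw [sub_eq_zero.mp h3, Nat.cast_sub (by omega)]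
  simp
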